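/- arXiv:1601.07277 — 4 statements merged into one kernel-verified Lean document; each statement's English description precedes it below -/
import Mathlib

section
/- Let n and k be positive integers with k ≤ n and let M > 0. The convex hull of the set C = {z ∈ ℝ^n : card(z) ≤ k and ‖z‖_∞ ≤ M} equals the set {z ∈ ℝ^n : ‖z‖_1 ≤ kM and ‖z‖_∞ ≤ M}. -/
open Classical in
/-- the coordinates with absolute value strictly between zero and M -/
noncomputable def fracSet {n : ℕ} (M : ℝ) (z : Fin n → ℝ) : Finset (Fin n) :=
  Finset.univ.filter fun i => 0 < |z i| ∧ |z i| < M

theorem abs_add_mul_sign_aux (x t : ℝ) (hx : 0 < |x|) (ht : 0 ≤ |x| + t) :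
    |x + t * (x / |x|)| = |x| + t := by
  have h : x + t * (x / |x|) = (x / |x|) * (|x| + t) := by
    field_simp
  rw [h, abs_mul, abs_div, abs_abs, div_self hx.ne', one_mul, abs_of_nonneg ht]

theorem step_aux {n : ℕ} (M K : ℝ) (z : Fin n → ℝ)
    (hz : ∑ i, |z i| ≤ K ∧ ∀ i, |z i| ≤ M) (i j : Fin n) (hij : i ≠ j)
    (hi : i ∈ fracSet M z) (hj : j ∈ fracSet M z) :
    ∃ t : ℝ, 0 < t ∧ ∃ w : Fin n → ℝ,
      (∀ l, w l = z l + t * ((Pi.single i (z i / |z i|) : Fin n → ℝ) l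
        - (Pi.single j (z j / |z j|) : Fin n → ℝ) l)) ∧
      (∑ i, |w i| ≤ K ∧ ∀ i, |w i| ≤ M) ∧ (fracSet M w).card < (fracSet M z).card := by
  obtain ⟨hi0, hiM⟩ : 0 < |z i| ∧ |z i| < M := by simpa [fracSet] using hi
  obtain ⟨hj0, hjM⟩ : 0 < |z j| ∧ |z j| < M := by simpa [fracSet] using hj
  set t := min (M - |z i|) (|z j|) with ht
  have ht0 : 0 < t := lt_min (by linarith) hj0
  have ht1 : t ≤ M - |z i| := min_le_left _ _
  have ht2 : t ≤ |z j| := min_le_right _ _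
  refine ⟨t, ht0, _, fun l => rfl, ?_⟩
  set w : Fin n → ℝ := fun l => z l + t * ((Pi.single i (z i / |z i|) : Fin n → ℝ) l
        - (Pi.single j (z j / |z j|) : Fin n → ℝ) l) with hw
  have wi : |w i| = |z i| + t := by
    rw [← abs_add_mul_sign_aux (z i) t hi0 (by linarith)]
    simp [hw, hij]
  have wj : |w j| = |z j| - t := by
    have := abs_add_mul_sign_aux (z j) (-t) hj0 (by linarith)
    rw [sub_eq_add_neg, ← this]
    simp [hw, hij.symm]
  have wl : ∀ l, l ≠ i → l ≠ j → w l = z l := by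
    intro l h1 h2
    simp [hw, h1, h2]
  have wall : ∀ l, |w l| = |z l| + ((Pi.single i t : Fin n → ℝ) l
      - (Pi.single j t : Fin n → ℝ) l) := by
    intro l
    by_cases h1 : l = i
    · subst h1; simp [wi, hij]
    by_cases h2 : l = j
    · subst h2; simp [wj, h1, sub_eq_add_neg]
    simp [wl l h1 h2, h1, h2]
  refine ⟨⟨?_, ?_⟩, ?_⟩
  · have : ∑ l, |w l| = ∑ l, |z l| := by
      rw [Finset.sum_congr rfl (fun l _ => wall l), Finset.sum_add_distrib,
        Finset.sum_sub_distrib]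
      simp
    exact this ▸ hz.1
  · intro l
    by_cases h1 : l = i
    · subst h1; linarith
    by_cases h2 : l = j
    · subst h2; linarith
    exact (congrArg abs (wl l h1 h2)).trans_le (hz.2 l)
  · apply Finset.card_lt_card
    rw [Finset.ssubset_iff_of_subset]
    · rcases min_choice (M - |z i|) (|z j|) with h | h
      · refine ⟨i, hi, ?_⟩
        have : |w i| = M := by rw [wi, ht, h]; ring
        simp [fracSet, this]
      · refine ⟨j, hj, ?_⟩
        have : |w j| = 0 := by rw [wj, ht, h]; ring
        simp only [fracSet, Finset.mem_filter, this]
        simp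
    · intro l hl
      by_cases h1 : l = i
      · subst h1; exact hi
      by_cases h2 : l = j
      · subst h2; exact hj
      simpa only [fracSet, Finset.mem_filter, wl l h1 h2] using hl

theorem base_aux {n : ℕ} (k : ℕ) (M : ℝ) (hM : 0 < M) (z : Fin n → ℝ)
    (hz : ∑ i, |z i| ≤ k * M ∧ ∀ i, |z i| ≤ M) (hF : (fracSet M z).card ≤ 1) :
    (Finset.univ.filter fun i => z i ≠ 0).card ≤ k := by
  by_contra! hc
  set S := Finset.univ.filter fun i => z i ≠ 0 with hS
  have hsum : ∑ i ∈ S, |z i| ≤ k * M :=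
    (Finset.sum_le_sum_of_subset_of_nonneg (Finset.subset_univ _)
      (fun _ _ _ => abs_nonneg _)).trans hz.1
  have hfull : ∀ l ∈ S, l ∉ fracSet M z → |z l| = M := by
    intro l hl hl'
    have h0 : 0 < |z l| := abs_pos.2 (by simpa [hS] using hl)
    by_contra hne
    exact hl' (by simp only [fracSet, Finset.mem_filter]; exact ⟨Finset.mem_univ _, h0, lt_of_le_of_ne (hz.2 l) hne⟩)
  have hkS : (k : ℝ) + 1 ≤ S.card := by exact_mod_cast hc
  rcases Finset.eq_empty_or_nonempty (fracSet M z) with he | ⟨i, hi⟩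
  · have : ∑ l ∈ S, |z l| = S.card * M := by
      rw [Finset.sum_congr rfl (fun l hl => hfull l hl (by simp [he]))]
      simp
    nlinarith
  · have hi' : 0 < |z i| ∧ |z i| < M := by simpa [fracSet] using hi
    have hiS : i ∈ S := by simpa [hS] using hi'.1
    have h1 : ∑ l ∈ S.erase i, |z l| = (S.erase i).card * M := by
      rw [Finset.sum_congr rfl (fun l hl => hfull l (Finset.mem_of_mem_erase hl) (fun h =>
        Finset.ne_of_mem_erase hl (Finset.card_le_one.1 hF l h i hi)))]
      simp
    have h2 := Finset.add_sum_erase S (fun l => |z l|) hiS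
    have h3 : ((S.erase i).card : ℝ) + 1 = S.card := by
      exact_mod_cast Finset.card_erase_add_one hiS
    nlinarith

/-- The convex hull of the set of `k`-sparse vectors with sup norm at most `M`
equals the set of vectors with ℓ1 norm at most `k * M` and sup norm at most `M`. -/
theorem stmt0 (n k : ℕ) (hn : 0 < n) (hk : 0 < k) (hkn : k ≤ n) (M : ℝ) (hM : 0 < M) :
    convexHull ℝ {z : Fin n → ℝ |
        (Finset.univ.filter fun i => z i ≠ 0).card ≤ k ∧ ∀ i, |z i| ≤ M} =
      {z : Fin n → ℝ | ∑ i, |z i| ≤ k * M ∧ ∀ i, |z i| ≤ M} := by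
  apply Set.Subset.antisymm
  · apply convexHull_min
    · rintro z ⟨hz, hzM⟩
      refine ⟨?_, hzM⟩
      have h1 : ∑ i, |z i| = ∑ i ∈ Finset.univ.filter (fun i => z i ≠ 0), |z i| := by
        symm
        apply Finset.sum_subset (Finset.subset_univ _)
        intro l _ hl
        simpa using hl
      rw [h1]
      calc _ ≤ ∑ i ∈ Finset.univ.filter (fun i => z i ≠ 0), M :=
            Finset.sum_le_sum fun i _ => hzM i
        _ = (Finset.univ.filter (fun i => z i ≠ 0)).card * M := by simp
        _ ≤ _ := by gcongr
    · intro x hx y hy a b ha hb hab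
      have key : ∀ i, |(a • x + b • y) i| ≤ a * |x i| + b * |y i| := by
        intro i
        simp only [Pi.add_apply, Pi.smul_apply, smul_eq_mul]
        refine (abs_add_le _ _).trans ?_
        rw [abs_mul, abs_mul, abs_of_nonneg ha, abs_of_nonneg hb]
      have comb : ∀ u v C : ℝ, u ≤ C → v ≤ C → a * u + b * v ≤ C := by
        intro u v C h1 h2
        calc a * u + b * v ≤ a * C + b * C := by gcongr
          _ = C := by rw [← add_mul, hab, one_mul]
      refine ⟨?_, fun i => (key i).trans (comb _ _ _ (hx.2 i) (hy.2 i))⟩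
      refine (Finset.sum_le_sum fun i _ => key i).trans ?_
      rw [Finset.sum_add_distrib, ← Finset.mul_sum, ← Finset.mul_sum]
      exact comb _ _ _ hx.1 hy.1
  · intro z hz
    induction hm : (fracSet M z).card using Nat.strong_induction_on generalizing z with
    | _ m ih =>
    by_cases hF : (fracSet M z).card ≤ 1
    · exact subset_convexHull ℝ _ ⟨base_aux k M hM z hz hF, hz.2⟩
    · obtain ⟨i, hi, j, hj, hij⟩ := Finset.one_lt_card.1 (not_le.1 hF)
      obtain ⟨t, ht, w, hw, hwB, hwc⟩ := step_aux M _ z hz i j hij hi hj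
      obtain ⟨s, hs, v, hv, hvB, hvc⟩ := step_aux M _ z hz j i hij.symm hj hi
      have hwm := ih _ (hm ▸ hwc) hwB rfl
      have hvm := ih _ (hm ▸ hvc) hvB rfl
      have := (convex_convexHull ℝ _) hwm hvm (a := s / (t + s)) (b := t / (t + s))
        (by positivity) (by positivity) (by field_simp; ring)
      convert this using 1
      ext l
      simp only [Pi.add_apply, Pi.smul_apply, smul_eq_mul, hw l, hv l]
      field_simp
      ring
end

section
/- Let n and k be positive integers with k ≤ n, let M > 0, and let C = {z ∈ ℝ^n : card(z) ≤ k and ‖z‖_∞ ≤ M}. Given z ∈ ℝ^n, let I ⊆ {1,…,n} be a set of k indices of the k largest values of |z_i|, i.e., |z_i| ≥ |z_j| for all i ∈ I and j ∉ I. Define p ∈ ℝ^n by p_i = M if i ∈ I and z_i > M; p_i = −M if i ∈ I and z_i < −M; p_i = z_i if i ∈ I and |z_i| ≤ M; and p_i = 0 if i ∉ I. Then p ∈ C and for every x ∈ C, ‖p − z‖_2 ≤ ‖x − z‖_2; that is, p is a Euclidean projection of z onto C. -/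
/-- the gain obtained from keeping an entry of magnitude `a` -/
noncomputable def gainFn (M a : ℝ) : ℝ := a ^ 2 - (max (a - M) 0) ^ 2

theorem gainFn_mono {M a b : ℝ} (hM : 0 < M) (ha : 0 ≤ a) (hab : a ≤ b) :
    gainFn M a ≤ gainFn M b := by
  unfold gainFn
  rcases max_cases (a - M) 0 with ⟨h1, h2⟩ | ⟨h1, h2⟩ <;>
  rcases max_cases (b - M) 0 with ⟨h3, h4⟩ | ⟨h3, h4⟩ <;> rw [h1, h3] <;> nlinarith

theorem gainFn_nonneg {M a : ℝ} (hM : 0 < M) (ha : 0 ≤ a) : 0 ≤ gainFn M a := by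
  have := gainFn_mono hM le_rfl ha
  have h0 : gainFn M 0 = 0 := by
    unfold gainFn
    rw [max_eq_right (by linarith)]; norm_num
  linarith

theorem clip_eq {M t : ℝ} (hM : 0 < M) :
    ((if M < t then M else if t < -M then -M else t) - t) ^ 2 = t ^ 2 - gainFn M |t| := by
  unfold gainFn
  split_ifs with h1 h2
  · rw [abs_of_pos (by linarith), max_eq_left (by linarith)]; ring
  · rw [abs_of_neg (by linarith), max_eq_left (by linarith)]; ring
  · have : |t| ≤ M := abs_le.2 ⟨by linarith, by linarith⟩
    rw [max_eq_right (by linarith), sq_abs]; ring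

theorem clip_le {M t x : ℝ} (hx : |x| ≤ M) :
    t ^ 2 - gainFn M |t| ≤ (x - t) ^ 2 := by
  unfold gainFn
  have h1 : |t| - M ≤ |x - t| := by
    have := abs_sub_abs_le_abs_sub t x
    rw [abs_sub_comm] at this
    linarith
  have h2 : max (|t| - M) 0 ≤ |x - t| := max_le h1 (abs_nonneg _)
  have h3 := pow_le_pow_left₀ (le_max_right _ _) h2 2
  rw [sq_abs] at h3
  rw [sq_abs]; linarith

/-- Euclidean projection onto the set of `k`-sparse vectors with sup norm at most `M`:
keep the `k` largest-magnitude entries (clipped to `[-M, M]`) and zero out the rest. -/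
theorem stmt1 (n k : ℕ) (hn : 0 < n) (hk : 0 < k) (hkn : k ≤ n) (M : ℝ) (hM : 0 < M)
    (z : EuclideanSpace ℝ (Fin n)) (I : Finset (Fin n)) (hIcard : I.card = k)
    (hbig : ∀ i ∈ I, ∀ j ∉ I, |z j| ≤ |z i|)
    (p : EuclideanSpace ℝ (Fin n))
    (hp : ∀ i, p i =
      if i ∈ I then (if M < z i then M else if z i < -M then -M else z i) else 0) :
    ((Finset.univ.filter fun i => p i ≠ 0).card ≤ k ∧ ∀ i, |p i| ≤ M) ∧
      ∀ x : EuclideanSpace ℝ (Fin n),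
        ((Finset.univ.filter fun i => x i ≠ 0).card ≤ k ∧ ∀ i, |x i| ≤ M) →
          ‖p - z‖ ≤ ‖x - z‖ := by
  refine ⟨⟨?_, ?_⟩, ?_⟩
  · rw [← hIcard]
    apply Finset.card_le_card
    intro i hi
    by_contra h
    simp [hp, h] at hi
  · intro i
    rw [hp, abs_le]
    split_ifs <;> constructor <;> linarith
  · rintro x ⟨hx1, hx2⟩
    rw [EuclideanSpace.norm_eq, EuclideanSpace.norm_eq]
    apply Real.sqrt_le_sqrt
    have hne : I.Nonempty := Finset.card_pos.1 (by omega)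
    obtain ⟨i0, hi0, hmin⟩ := Finset.exists_min_image I (fun i => |z i|) hne
    set τ := gainFn M |z i0| with hτ
    have hτ0 : 0 ≤ τ := gainFn_nonneg hM (abs_nonneg _)
    have key : ∀ i, (p i - z i) ^ 2 ≤ (x i - z i) ^ 2
        + ((if x i ≠ 0 then τ else 0) - (if i ∈ I then τ else 0)) := by
      intro i
      have hc := clip_le (t := z i) (hx2 i)
      have h0 : 0 ≤ gainFn M |z i| := gainFn_nonneg hM (abs_nonneg _)
      rw [hp]
      by_cases hi : i ∈ I
      · have h1 : τ ≤ gainFn M |z i| := gainFn_mono hM (abs_nonneg _) (hmin i hi)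
        rw [if_pos hi, if_pos hi, clip_eq hM]
        split_ifs with h
        · linarith
        · have : x i = 0 := not_not.1 h
          rw [this]; linarith
      · have h1 : gainFn M |z i| ≤ τ := gainFn_mono hM (abs_nonneg _) (hbig i0 hi0 i hi)
        rw [if_neg hi, if_neg hi]
        split_ifs with h
        · linarith
        · have : x i = 0 := not_not.1 h
          rw [this]; linarith
    have hs := Finset.sum_le_sum (fun i (_ : i ∈ Finset.univ) => key i)
    rw [Finset.sum_add_distrib, Finset.sum_sub_distrib, ← Finset.sum_filter,
      ← Finset.sum_filter, Finset.sum_const, Finset.sum_const, nsmul_eq_mul, nsmul_eq_mul,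
      Finset.filter_mem_eq_inter, Finset.univ_inter, hIcard] at hs
    have hx1' : ((Finset.univ.filter fun i => x i ≠ 0).card : ℝ) ≤ k := by exact_mod_cast hx1
    have hm := mul_le_mul_of_nonneg_right hx1' hτ0
    simp only [PiLp.sub_apply, Real.norm_eq_abs, sq_abs]
    linarith
end

section
/- Let A ∈ ℝ^{n×n} be symmetric positive definite, b ∈ ℝ^n, and α, β ∈ ℝ with β ≥ α ≥ −bᵀA⁻¹b. Let C = {z ∈ ℝ^n : α ≤ zᵀAz + 2bᵀz ≤ β}. Fix z ∈ C with zᵀAz + 2bᵀz + bᵀA⁻¹b > 0 and define R(z) = {x ∈ ℝ^n : (xᵀAz + bᵀ(x+z) + bᵀA⁻¹b)/√(zᵀAz + 2bᵀz + bᵀA⁻¹b) ≥ √(α + bᵀA⁻¹b) and xᵀAx + 2bᵀx ≤ β}. Then z ∈ R(z), and every x ∈ R(z) satisfies α ≤ xᵀAx + 2bᵀx ≤ β; that is, R(z) is a (convex) restriction of C containing z. -/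
open Matrix

/-- The restriction of the quadratic set `C = {z : α ≤ zᵀAz + 2bᵀz ≤ β}` at a point `z ∈ C`
contains `z` and is a subset of `C`. -/
theorem stmt8 (n : ℕ) (A : Matrix (Fin n) (Fin n) ℝ) (hA : A.PosDef) (b : Fin n → ℝ)
    (α β : ℝ) (hαβ : α ≤ β) (hα : -(b ⬝ᵥ A⁻¹.mulVec b) ≤ α)
    (z : Fin n → ℝ)
    (hzC : α ≤ z ⬝ᵥ A.mulVec z + 2 * (b ⬝ᵥ z) ∧ z ⬝ᵥ A.mulVec z + 2 * (b ⬝ᵥ z) ≤ β)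
    (hpos : 0 < z ⬝ᵥ A.mulVec z + 2 * (b ⬝ᵥ z) + b ⬝ᵥ A⁻¹.mulVec b) :
    z ∈ {x : Fin n → ℝ |
        Real.sqrt (α + b ⬝ᵥ A⁻¹.mulVec b) ≤
          (x ⬝ᵥ A.mulVec z + b ⬝ᵥ (x + z) + b ⬝ᵥ A⁻¹.mulVec b) /
            Real.sqrt (z ⬝ᵥ A.mulVec z + 2 * (b ⬝ᵥ z) + b ⬝ᵥ A⁻¹.mulVec b) ∧
        x ⬝ᵥ A.mulVec x + 2 * (b ⬝ᵥ x) ≤ β} ∧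
      ∀ x : Fin n → ℝ,
        x ∈ {x : Fin n → ℝ |
          Real.sqrt (α + b ⬝ᵥ A⁻¹.mulVec b) ≤
            (x ⬝ᵥ A.mulVec z + b ⬝ᵥ (x + z) + b ⬝ᵥ A⁻¹.mulVec b) /
              Real.sqrt (z ⬝ᵥ A.mulVec z + 2 * (b ⬝ᵥ z) + b ⬝ᵥ A⁻¹.mulVec b) ∧
          x ⬝ᵥ A.mulVec x + 2 * (b ⬝ᵥ x) ≤ β} →
        α ≤ x ⬝ᵥ A.mulVec x + 2 * (b ⬝ᵥ x) ∧ x ⬝ᵥ A.mulVec x + 2 * (b ⬝ᵥ x) ≤ β := by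
  have hsymm : ∀ u v : Fin n → ℝ, u ⬝ᵥ A.mulVec v = v ⬝ᵥ A.mulVec u := by
    intro u v
    have hT : Aᵀ = A := by simpa using hA.isHermitian.eq
    rw [dotProduct_mulVec, ← mulVec_transpose, hT, dotProduct_comm]
  have hdet : IsUnit A.det := (Matrix.isUnit_iff_isUnit_det A).1 hA.isUnit
  obtain ⟨c, hc⟩ : ∃ c, c = A⁻¹.mulVec b := ⟨_, rfl⟩
  have hAc : A.mulVec c = b := by
    rw [hc, mulVec_mulVec, Matrix.mul_nonsing_inv A hdet, one_mulVec]
  have hnn : ∀ v : Fin n → ℝ, 0 ≤ v ⬝ᵥ A.mulVec v := by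
    intro v
    simpa using hA.posSemidef.dotProduct_mulVec_nonneg v
  rw [← hc] at hα hpos ⊢
  have hk : ∀ u v : Fin n → ℝ, (u + c) ⬝ᵥ A.mulVec (v + c)
      = u ⬝ᵥ A.mulVec v + b ⬝ᵥ (u + v) + b ⬝ᵥ c := by
    intro u v
    have h1 : c ⬝ᵥ A.mulVec v = b ⬝ᵥ v := by rw [hsymm, hAc, dotProduct_comm]
    rw [mulVec_add, hAc, add_dotProduct, dotProduct_add, dotProduct_add, dotProduct_add, h1,
      dotProduct_comm u b, dotProduct_comm c b]
    ring
  have hCS : ∀ u w : Fin n → ℝ, 0 < w ⬝ᵥ A.mulVec w →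
      (u ⬝ᵥ A.mulVec w) ^ 2 ≤ (u ⬝ᵥ A.mulVec u) * (w ⬝ᵥ A.mulVec w) := by
    intro u w hw
    have h := hnn ((w ⬝ᵥ A.mulVec w) • u - (u ⬝ᵥ A.mulVec w) • w)
    simp only [mulVec_sub, mulVec_smul, sub_dotProduct, dotProduct_sub, smul_dotProduct,
      dotProduct_smul, smul_eq_mul] at h
    rw [hsymm w u] at h
    have h2 : 0 ≤ (w ⬝ᵥ A.mulVec w) *
        ((u ⬝ᵥ A.mulVec u) * (w ⬝ᵥ A.mulVec w) - (u ⬝ᵥ A.mulVec w) ^ 2) := by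
      refine h.trans_eq ?_
      ring
    have := nonneg_of_mul_nonneg_right h2 hw
    linarith
  have hq : ∀ v : Fin n → ℝ, (v + c) ⬝ᵥ A.mulVec (v + c)
      = v ⬝ᵥ A.mulVec v + 2 * (b ⬝ᵥ v) + b ⬝ᵥ c := by
    intro v
    rw [hk, dotProduct_add]
    ring
  refine ⟨⟨?_, hzC.2⟩, ?_⟩
  · rw [← hk, hq, Real.div_sqrt]
    exact Real.sqrt_le_sqrt (by linarith [hzC.1])
  · rintro x ⟨h1, h2⟩
    refine ⟨?_, h2⟩
    rw [← hk, ← hq] at h1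
    rw [← hq] at hpos
    have h3 := hCS (x + c) (z + c) hpos
    have h4 := pow_le_pow_left₀ (Real.sqrt_nonneg _) h1 2
    rw [Real.sq_sqrt (by linarith), div_pow, Real.sq_sqrt hpos.le] at h4
    have h5 := h4.trans ((div_le_iff₀ hpos).2 h3)
    rw [hq] at h5
    linarith
end

section
/- Let 0 < r ≤ R, let C = {x ∈ ℝ^n : r ≤ ‖x‖_2 ≤ R} be the annulus, and let z ∈ C. Define R(z) = {x ∈ ℝ^n : xᵀz ≥ r‖z‖_2 and ‖x‖_2 ≤ R}. Then R(z) is convex, z ∈ R(z), and R(z) ⊆ C; that is, every x with xᵀz ≥ r‖z‖_2 and ‖x‖_2 ≤ R satisfies r ≤ ‖x‖_2 ≤ R. -/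
open scoped RealInnerProductSpace

/-- The restriction `{x : xᵀz ≥ r‖z‖, ‖x‖ ≤ R}` of the annulus `{x : r ≤ ‖x‖ ≤ R}` at a
point `z` of the annulus is convex, contains `z`, and is a subset of the annulus. -/
theorem stmt10 (n : ℕ) (r R : ℝ) (hr : 0 < r) (hrR : r ≤ R)
    (z : EuclideanSpace ℝ (Fin n)) (hz : r ≤ ‖z‖ ∧ ‖z‖ ≤ R) :
    Convex ℝ {x : EuclideanSpace ℝ (Fin n) | r * ‖z‖ ≤ ⟪x, z⟫ ∧ ‖x‖ ≤ R} ∧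
      z ∈ {x : EuclideanSpace ℝ (Fin n) | r * ‖z‖ ≤ ⟪x, z⟫ ∧ ‖x‖ ≤ R} ∧
      {x : EuclideanSpace ℝ (Fin n) | r * ‖z‖ ≤ ⟪x, z⟫ ∧ ‖x‖ ≤ R} ⊆
        {x : EuclideanSpace ℝ (Fin n) | r ≤ ‖x‖ ∧ ‖x‖ ≤ R} := by
  refine ⟨?_, ⟨?_, hz.2⟩, ?_⟩
  · rintro x ⟨hx1, hx2⟩ y ⟨hy1, hy2⟩ a b ha hb hab
    refine ⟨?_, ?_⟩
    · rw [inner_add_left, real_inner_smul_left, real_inner_smul_left]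
      have h1 := mul_le_mul_of_nonneg_left hx1 ha
      have h2 := mul_le_mul_of_nonneg_left hy1 hb
      have h3 : a * (r * ‖z‖) + b * (r * ‖z‖) = r * ‖z‖ := by
        rw [← add_mul, hab, one_mul]
      linarith
    · have h0 := norm_add_le (a • x) (b • y)
      rw [norm_smul, norm_smul, Real.norm_of_nonneg ha, Real.norm_of_nonneg hb] at h0
      have h1 := mul_le_mul_of_nonneg_left hx2 ha
      have h2 := mul_le_mul_of_nonneg_left hy2 hb
      have h3 : a * R + b * R = R := by rw [← add_mul, hab, one_mul]
      linarith
  · rw [real_inner_self_eq_norm_mul_norm]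
    exact mul_le_mul_of_nonneg_right hz.1 (norm_nonneg z)
  · rintro x ⟨hx1, hx2⟩
    refine ⟨?_, hx2⟩
    exact le_of_mul_le_mul_right (hx1.trans (real_inner_le_norm x z)) (hr.trans_le hz.1)
end
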